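/- arXiv:1604.03723 — 2 statements merged into one kernel-verified Lean document; each statement's English description precedes it below -/
import Mathlib

section
/- Let n ≥ 2 and s ≥ 1 be integers, let k be an integer, and let p₁, q₁, p₂, q₂ be integers with q₂ > 0 and with p₁ and q₁ coprime. Assume the relations p₂ = s·n·p₁, n·q₂ = s·q₁, p₁ + q₁·k = p₂, and q₁ = q₂. Then s = n, p₂ = n²·p₁, p₁·gcd(n² − 1, k) = k, and q₁·gcd(n² − 1, k) = n² − 1; in particular q₂ divides n² − 1. Here gcd denotes the greatest nonnegative common divisor of integers. -/
/-!
Cancelling `q₁ = q₂ > 0` in `n q₂ = s q₁` gives `s = n`, and the remaining relations become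
`q₁ k = p₁ (n² - 1)`. Since `p₁` and `q₁` are coprime, `n² - 1 = q₁ t` and `k = p₁ t` for some
integer `t`, which is positive because `n ≥ 2` and `q₁ > 0`; hence `gcd (n² - 1, k) = t`.
-/

/-- Arithmetic form of Lemma 4.1: given `n ≥ 2`, `s ≥ 1`, integers `k, p₁, q₁, p₂, q₂`
with `q₂ > 0`, `p₁` coprime to `q₁`, and the relations `p₂ = s·n·p₁`, `n·q₂ = s·q₁`,
`p₁ + q₁·k = p₂`, `q₁ = q₂`, we get `s = n`, `p₂ = n²·p₁`,
`p₁·gcd(n²−1,k) = k`, `q₁·gcd(n²−1,k) = n²−1`, and `q₂ ∣ n²−1`. -/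
theorem stmt3 (n s k p₁ q₁ p₂ q₂ : ℤ)
    (hn : 2 ≤ n) (hs : 1 ≤ s) (hq₂ : 0 < q₂) (hcop : IsCoprime p₁ q₁)
    (h1 : p₂ = s * n * p₁) (h2 : n * q₂ = s * q₁)
    (h3 : p₁ + q₁ * k = p₂) (h4 : q₁ = q₂) :
    s = n ∧ p₂ = n ^ 2 * p₁ ∧
      p₁ * (Int.gcd (n ^ 2 - 1) k : ℤ) = k ∧
      q₁ * (Int.gcd (n ^ 2 - 1) k : ℤ) = n ^ 2 - 1 ∧
      q₂ ∣ n ^ 2 - 1 := by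
  subst h4
  have hsn : s = n := (mul_right_cancel₀ hq₂.ne' h2).symm
  subst hsn
  have hk : q₁ * k = p₁ * (s ^ 2 - 1) := by linear_combination h3 + h1
  -- Coprimality of `p₁` and `q₁` makes `t = (s² - 1) / q₁` an integer, and then `k = p₁ t`.
  obtain ⟨t, ht⟩ : q₁ ∣ s ^ 2 - 1 := hcop.symm.dvd_of_dvd_mul_left ⟨k, hk.symm⟩
  have hkt : k = p₁ * t :=
    mul_left_cancel₀ hq₂.ne' (by rw [hk, ht]; ring)
  have ht0 : 0 < t := by
    refine pos_of_mul_pos_right (a := q₁) ?_ hq₂.le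
    rw [← ht]
    nlinarith
  have hg : (Int.gcd (s ^ 2 - 1) k : ℤ) = t := by
    rw [ht, hkt, Int.gcd_mul_right, Int.isCoprime_iff_gcd_eq_one.mp hcop.symm, one_mul,
      Int.natAbs_of_nonneg ht0.le]
  refine ⟨rfl, by rw [h1]; ring, ?_, ?_, ⟨t, ht⟩⟩
  · rw [hg, hkt]
  · rw [hg, ht]
end

section
/- If π is a continuous self-map of the unit circle in ℂ that is a covering map, then there exist a nonzero integer m and a homeomorphism u of the circle onto itself such that π z = (u z)^m for every z in the circle. -/
/-!
The map `π ∘ exp : ℝ → Circle` lifts through the covering `exp` to a continuous `F : ℝ → ℝ` with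
`exp (F t) = π (exp t)` (`exists_real_lift`). Since `π` and `exp` are local homeomorphisms, so is
`F`; hence `F` is open, has no local extremum, and is injective by Rolle's argument
(`injective_of_isOpenMap`). The difference `F (t + 2π) - F t` is a continuous function with values
in `2πℤ`, hence a constant `2πm` (`exists_degree`), and `m ≠ 0` by injectivity of `F`. The function
`G = F / m` is then continuous and injective and satisfies `G (t + 2π) = G t + 2π`, so it descends
to a homeomorphism `u` of the circle (`exists_homeomorph_of_equivariant`), and
`(u (exp t)) ^ m = exp (m * G t) = exp (F t) = π (exp t)`.
-/

open Topology

lemma exists_real_lift (f : Circle → Circle) (hf : Continuous f) :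
    ∃ F : ℝ → ℝ, Continuous F ∧ ∀ t, Circle.exp (F t) = f (Circle.exp t) := by
  obtain ⟨e₀, he₀⟩ := Circle.exp_surjective (f (Circle.exp 0))
  obtain ⟨F, ⟨-, hF⟩, -⟩ := Circle.isCoveringMap_exp.existsUnique_continuousMap_lifts
    (⟨fun t : ℝ => f (Circle.exp t), by fun_prop⟩ : C(ℝ, Circle)) 0 e₀ he₀
  exact ⟨F, F.continuous, fun t => congrFun hF t⟩

lemma not_isLocalExtr_of_isOpenMap {F : ℝ → ℝ} (ho : IsOpenMap F) (c : ℝ) :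
    ¬ IsLocalExtr F c := by
  rintro (h | h)
  · have h1 : ∀ᶠ y in 𝓝 (F c), F c ≤ y := ho.nhds_le c h
    obtain ⟨y, hy, hlt⟩ :=
      ((h1.filter_mono nhdsWithin_le_nhds).and (self_mem_nhdsWithin (s := Set.Iio (F c)))).exists
    exact absurd hlt (not_lt.mpr hy)
  · have h1 : ∀ᶠ y in 𝓝 (F c), y ≤ F c := ho.nhds_le c h
    obtain ⟨y, hy, hlt⟩ :=
      ((h1.filter_mono nhdsWithin_le_nhds).and (self_mem_nhdsWithin (s := Set.Ioi (F c)))).exists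
    exact absurd hlt (not_lt.mpr hy)

lemma injective_of_isOpenMap {F : ℝ → ℝ} (hc : Continuous F) (ho : IsOpenMap F) :
    Function.Injective F := by
  intro a b hF
  by_contra hne
  wlog hab : a < b generalizing a b
  · exact this hF.symm (Ne.symm hne) (lt_of_le_of_ne (not_lt.mp hab) (Ne.symm hne))
  obtain ⟨c, -, h⟩ := exists_isLocalExtr_Ioo hab hc.continuousOn hF
  exact not_isLocalExtr_of_isOpenMap ho c h

/-- The integer `m` is the degree of the circle map covered by `F`. -/
lemma exists_degree {F : ℝ → ℝ} (hc : Continuous F)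
    (hper : ∀ t, Circle.exp (F (t + 2 * Real.pi)) = Circle.exp (F t)) :
    ∃ m : ℤ, ∀ t, F (t + 2 * Real.pi) = F t + m * (2 * Real.pi) := by
  choose n hn using fun t => Circle.exp_eq_exp.1 (hper t)
  have hcont : Continuous n := by
    rw [Int.isClosedEmbedding_coe_real.isEmbedding.continuous_iff]
    have : ((↑) : ℤ → ℝ) ∘ n = fun t => (F (t + 2 * Real.pi) - F t) / (2 * Real.pi) := by
      funext t
      rw [hn t]
      simp [Real.pi_ne_zero]
    rw [this]
    fun_prop
  exact ⟨n 0, fun t => by rw [hn t, PreconnectedSpace.constant inferInstance hcont (x := t)]⟩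

lemma add_int_mul_two_pi {G : ℝ → ℝ} (hG : ∀ t, G (t + 2 * Real.pi) = G t + 2 * Real.pi)
    (t : ℝ) (k : ℤ) : G (t + k * (2 * Real.pi)) = G t + k * (2 * Real.pi) := by
  induction k with
  | zero => simp
  | succ i ih =>
    rw [show t + ((i + 1 : ℤ) : ℝ) * (2 * Real.pi) = t + (i : ℤ) * (2 * Real.pi) + 2 * Real.pi by
      push_cast; ring, hG, ih]
    push_cast; ring
  | pred i ih =>
    have h := hG (t + ((-i - 1 : ℤ) : ℝ) * (2 * Real.pi))
    rw [show t + ((-i - 1 : ℤ) : ℝ) * (2 * Real.pi) + 2 * Real.pi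
      = t + ((-i : ℤ) : ℝ) * (2 * Real.pi) by push_cast; ring, ih] at h
    push_cast at h ⊢
    linarith

/-- The intermediate value theorem applies because translation-equivariance makes `G` unbounded
in both directions. -/
lemma surjective_of_equivariant {G : ℝ → ℝ} (hc : Continuous G)
    (hG : ∀ t, G (t + 2 * Real.pi) = G t + 2 * Real.pi) : Function.Surjective G := by
  intro y
  have key := add_int_mul_two_pi hG 0
  have hpi : 0 < 2 * Real.pi := by positivity
  refine mem_range_of_exists_le_of_exists_ge hc
    ⟨0 + (⌊(y - G 0) / (2 * Real.pi)⌋ : ℤ) * (2 * Real.pi), ?_⟩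
    ⟨0 + (⌈(y - G 0) / (2 * Real.pi)⌉ : ℤ) * (2 * Real.pi), ?_⟩
  · rw [key]
    have := (le_div_iff₀ hpi).1 (Int.floor_le ((y - G 0) / (2 * Real.pi)))
    linarith
  · rw [key]
    have := (div_le_iff₀ hpi).1 (Int.le_ceil ((y - G 0) / (2 * Real.pi)))
    linarith

lemma exists_homeomorph_of_equivariant {G : ℝ → ℝ} (hc : Continuous G)
    (hinj : Function.Injective G) (hG : ∀ t, G (t + 2 * Real.pi) = G t + 2 * Real.pi) :
    ∃ u : Circle ≃ₜ Circle, ∀ t, u (Circle.exp t) = Circle.exp (G t) := by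
  -- The choice of the argument is irrelevant, by equivariance of `G`.
  let v : Circle → Circle := fun z => Circle.exp (G (Complex.arg z))
  have hv : ∀ t, v (Circle.exp t) = Circle.exp (G t) := by
    intro t
    obtain ⟨k, hk⟩ := Circle.exp_eq_exp.1 (Circle.exp_arg (Circle.exp t))
    refine Circle.exp_eq_exp.2 ⟨k, ?_⟩
    rw [hk, add_int_mul_two_pi hG]
  have hq : IsQuotientMap Circle.exp :=
    Circle.isCoveringMap_exp.isQuotientMap Circle.exp_surjective
  have hvc : Continuous v := by
    rw [hq.continuous_iff]
    have : v ∘ Circle.exp = fun t => Circle.exp (G t) := funext hv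
    rw [this]
    fun_prop
  have hbij : Function.Bijective v := by
    constructor
    · intro z w h
      obtain ⟨s, rfl⟩ := Circle.exp_surjective z
      obtain ⟨t, rfl⟩ := Circle.exp_surjective w
      rw [hv, hv] at h
      obtain ⟨k, hk⟩ := Circle.exp_eq_exp.1 h
      rw [← add_int_mul_two_pi hG] at hk
      exact Circle.exp_eq_exp.2 ⟨k, hinj hk⟩
    · intro z
      obtain ⟨y, rfl⟩ := Circle.exp_surjective z
      obtain ⟨t, rfl⟩ := surjective_of_equivariant hc hG y
      exact ⟨Circle.exp t, hv t⟩
  exact ⟨(isHomeomorph_iff_continuous_bijective.2 ⟨hvc, hbij⟩).homeomorph v, hv⟩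

/-- Every continuous self-covering of the unit circle has the normal form
`π z = (u z)^m` for some nonzero integer `m` and some self-homeomorphism `u`. -/
theorem stmt6 (π : Circle → Circle) (hcont : Continuous π) (hcov : IsCoveringMap π) :
    ∃ (m : ℤ), m ≠ 0 ∧ ∃ u : Circle ≃ₜ Circle, ∀ z : Circle, π z = (u z) ^ m := by
  obtain ⟨F, hFc, hF⟩ := exists_real_lift π hcont
  have hloc : IsLocalHomeomorph F := by
    refine IsLocalHomeomorph.of_comp (g := Circle.exp) ?_ isLocalHomeomorph_circleExp hFc
    rw [show Circle.exp ∘ F = π ∘ Circle.exp from funext hF]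
    exact hcov.isLocalHomeomorph.comp isLocalHomeomorph_circleExp
  have hinj := injective_of_isOpenMap hFc hloc.isOpenMap
  obtain ⟨m, hm⟩ := exists_degree hFc fun t => by rw [hF, hF, Circle.exp_add_two_pi]
  have hm0 : m ≠ 0 := by
    rintro rfl
    have h := @hinj (0 + 2 * Real.pi) 0 (by simpa using hm 0)
    have := Real.pi_pos
    linarith
  have hmR : (m : ℝ) ≠ 0 := Int.cast_ne_zero.2 hm0
  obtain ⟨u, hu⟩ := exists_homeomorph_of_equivariant (G := fun t => F t / m) (by fun_prop)
    (fun s t h => hinj ((div_left_inj' hmR).1 h))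
    (fun t => by simp only [hm]; field_simp)
  refine ⟨m, hm0, u, fun z => ?_⟩
  obtain ⟨t, rfl⟩ := Circle.exp_surjective z
  rw [hu, ← hF, ← Circle.exp_zsmul, zsmul_eq_mul, mul_div_cancel₀ _ hmR]
end
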